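/- Let P be the uniform (arc-length) probability distribution on the ellipse L = {(x₁,x₂) : x₁² + 4x₂² = 4}. Then the optimal set of two-means for P is {(c, 0), (−c, 0)}, where c = (∫_{−π/2}^{π/2} 2 cos θ √(4 sin²θ + cos²θ) dθ) / (∫_{−π/2}^{π/2} √(4 sin²θ + cos²θ) dθ) is the first coordinate of the conditional expectation of X given that X lies in the closed right half-plane {x₁ ≥ 0}; moreover the boundary of the two Voronoi regions is the minor axis (the x₂-axis). -/

import Mathlib

open MeasureTheory Real Filter
open scoped ENNReal

noncomputable section

/-- The plane `ℝ²` with the Euclidean norm. -/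
abbrev E2 : Type := EuclideanSpace ℝ (Fin 2)

/-- The point `(a, b)` of `ℝ²`. -/
def pt (a b : ℝ) : E2 := !₂[a, b]

/-- The `n`th quantization error of a Borel probability measure `P` on `ℝ²`:
the infimum of `∫ min_{a ∈ α} ‖x - a‖² dP(x)` over all (nonempty) finite sets
`α ⊆ ℝ²` with at most `n` elements. -/
def quantErr (P : Measure E2) (n : ℕ) : ℝ :=
  sInf {v : ℝ | ∃ α : Set E2, α.Finite ∧ α.Nonempty ∧ α.ncard ≤ n ∧
    v = ∫ x, sInf ((fun a => ‖x - a‖ ^ 2) '' α) ∂P}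

/-- `α` is an optimal set of `n`-means for `P` if it attains the `n`th
quantization error. -/
def IsOptimalSet (P : Measure E2) (n : ℕ) (α : Set E2) : Prop :=
  α.Finite ∧ α.Nonempty ∧ α.ncard ≤ n ∧
    (∫ x, sInf ((fun a => ‖x - a‖ ^ 2) '' α) ∂P) = quantErr P n

/-- The ellipse `L = {(x₁, x₂) : x₁² + 4x₂² = 4}`. -/
def ellipseL : Set E2 := {p : E2 | (p 0) ^ 2 + 4 * (p 1) ^ 2 = 4}

/-- The perimeter `A = ∫₀^{2π} √(4 sin²θ + cos²θ) dθ` of the ellipse. -/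
def ellipseA : ℝ :=
  ∫ θ in (0 : ℝ)..(2 * Real.pi), Real.sqrt (4 * Real.sin θ ^ 2 + Real.cos θ ^ 2)

/-- The uniform probability distribution on the ellipse `L`: density `1/A`
with respect to one-dimensional Hausdorff (arc-length) measure on `L`. -/
def ellipseP : Measure E2 :=
  (ENNReal.ofReal ellipseA)⁻¹ • (μH[1] : Measure E2).restrict ellipseL

def ww (θ : ℝ) : ℝ := Real.sqrt (4 * Real.sin θ ^ 2 + Real.cos θ ^ 2)

lemma ww_cont : Continuous ww := by unfold ww; fun_prop

lemma ww_sq (θ : ℝ) : ww θ ^ 2 = 1 + 3 * sin θ ^ 2 := by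
  unfold ww
  rw [Real.sq_sqrt (by positivity)]
  nlinarith [Real.sin_sq_add_cos_sq θ]

lemma ww_nonneg (θ : ℝ) : 0 ≤ ww θ := Real.sqrt_nonneg _

lemma ww_pos (θ : ℝ) : 0 < ww θ := by
  have := ww_sq θ
  have h2 := ww_nonneg θ
  rcases h2.lt_or_eq with h | h
  · exact h
  · rw [← h] at this; nlinarith [sq_nonneg (sin θ)]

lemma ww_add_pi (θ : ℝ) : ww (θ + π) = ww θ := by
  unfold ww; simp [Real.sin_add_pi, Real.cos_add_pi]

lemma ww_neg (θ : ℝ) : ww (-θ) = ww θ := by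
  unfold ww; simp

def hA : ℝ := ∫ θ in (-(π / 2))..(π / 2), ww θ
def hN : ℝ := ∫ θ in (-(π / 2))..(π / 2), 2 * cos θ * ww θ

lemma le_half : -(π / 2) ≤ π / 2 := by linarith [pi_pos]

lemma int_sin_sq : ∫ θ in (-(π / 2))..(π / 2), sin θ ^ 2 = π / 2 := by
  rw [integral_sin_sq]; simp

lemma hA_lower : 3 * π / 2 ≤ hA := by
  have h1 : ∫ θ in (-(π / 2))..(π / 2), (1 + sin θ ^ 2) = 3 * π / 2 := by
    rw [intervalIntegral.integral_add (by simp) (by apply Continuous.intervalIntegrable; fun_prop),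
      int_sin_sq]
    simp; ring
  rw [← h1]
  apply intervalIntegral.integral_mono_on le_half
    (by apply Continuous.intervalIntegrable; fun_prop)
    (ww_cont.intervalIntegrable _ _)
  intro x _
  have := ww_sq x
  apply abs_le_of_sq_le_sq' _ (ww_nonneg x) |>.2
  rw [this]
  nlinarith [sin_sq_le_one x, sq_nonneg (sin x)]

lemma hA_pos : 0 < hA := by have := hA_lower; have := pi_pos; linarith

lemma hA_upper : hA ≤ 5.06 * π / 3.2 := by
  have h1 : ∫ θ in (-(π / 2))..(π / 2), (3.56 + 3 * sin θ ^ 2) / 3.2 = 5.06 * π / 3.2 := by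
    rw [intervalIntegral.integral_div, intervalIntegral.integral_add (by simp)
      (by apply Continuous.intervalIntegrable; fun_prop),
      intervalIntegral.integral_const_mul, int_sin_sq]
    simp; ring
  rw [← h1]
  apply intervalIntegral.integral_mono_on le_half (ww_cont.intervalIntegrable _ _)
    (by apply Continuous.intervalIntegrable; fun_prop)
  intro x _
  have := ww_sq x
  have h2 := sq_nonneg (ww x - 8 / 5)
  norm_num
  rw [le_div_iff₀ (by norm_num)]
  nlinarith

lemma cos_nn {x : ℝ} (hx : x ∈ Set.Icc (-(π / 2)) (π / 2)) : 0 ≤ cos x :=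
  cos_nonneg_of_mem_Icc hx

lemma int_cos_poly (a b : ℝ) : ∫ θ in (-(π / 2))..(π / 2), cos θ * (a + b * sin θ ^ 2)
    = 2 * a + 2 * b / 3 := by
  have : ∀ x ∈ Set.uIcc (-(π / 2)) (π / 2),
      HasDerivAt (fun θ => a * sin θ + b / 3 * sin θ ^ 3) (cos x * (a + b * sin x ^ 2)) x := by
    intro x _
    have h := ((hasDerivAt_sin x).const_mul a).add (((hasDerivAt_sin x).pow 3).const_mul (b / 3))
    exact h.congr_deriv (by push_cast; ring)
  rw [intervalIntegral.integral_eq_sub_of_hasDerivAt this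
    (by apply Continuous.intervalIntegrable; fun_prop)]
  simp; ring

lemma hN_lower : 16 / 3 ≤ hN := by
  have h1 := int_cos_poly 2 2
  have h2 : ∫ θ in (-(π / 2))..(π / 2), cos θ * (2 + 2 * sin θ ^ 2) ≤ hN := by
    apply intervalIntegral.integral_mono_on le_half
      (by apply Continuous.intervalIntegrable; fun_prop)
      (by have := ww_cont; apply Continuous.intervalIntegrable; fun_prop)
    intro x hx
    have h3 : 1 + sin x ^ 2 ≤ ww x := by
      have := ww_sq x
      apply abs_le_of_sq_le_sq' _ (ww_nonneg x) |>.2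
      rw [this]
      nlinarith [sin_sq_le_one x, sq_nonneg (sin x)]
    nlinarith [cos_nn hx]
  linarith

lemma hN_upper : hN ≤ 5.66 := by
  have h1 := int_cos_poly (3 / 1.414) (3 / 1.414)
  have h2 : hN ≤ ∫ θ in (-(π / 2))..(π / 2), cos θ * (3 / 1.414 + 3 / 1.414 * sin θ ^ 2) := by
    apply intervalIntegral.integral_mono_on le_half
      (by have := ww_cont; apply Continuous.intervalIntegrable; fun_prop)
      (by apply Continuous.intervalIntegrable; fun_prop)
    intro x hx
    have h3 : 2 * ww x ≤ (3 / 1.414 + 3 / 1.414 * sin x ^ 2) := by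
      have := ww_sq x
      nlinarith [sq_nonneg (ww x - 1.414)]
    nlinarith [cos_nn hx]
  norm_num at h1 ⊢
  linarith

lemma hA_le_hN : hA ≤ hN := by
  have := hA_upper; have := hN_lower; have := pi_lt_d2
  norm_num at *
  linarith

/-- trig inequality -/
lemma trig_ineq {z : ℝ} (h0 : 0 ≤ z) (h1 : z ≤ π / 2) :
    2 * ((π / 2 - z) * cos z - 1 + sin z) ≤ 1.25 * cos z ^ 2 := by
  have hp1 := pi_gt_d2
  have hp2 := pi_lt_d2
  by_cases hz : z ≤ 0.6
  · have hs : sin z ≤ z := sin_le h0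
    have hd : (π / 2 - z) ^ 2 ≤ 2.5 * (1 - z) := by
      norm_num at hp1 hp2 hz ⊢
      nlinarith
    norm_num at hd ⊢
    nlinarith [sq_nonneg (5 * cos z - 4 * (π / 2 - z))]
  · push Not at hz
    set x := π / 2 - z with hx
    have hx0 : 0 ≤ x := by linarith
    have hx1 : x ≤ 1 := by norm_num at hp2 hz; linarith
    have hc : cos z = sin x := by rw [hx, sin_pi_div_two_sub]
    have hs : sin z = cos x := by rw [hx, cos_pi_div_two_sub]
    rw [hc, hs]
    have hb := (abs_le.1 (cos_bound (abs_le.2 ⟨by linarith, hx1⟩))).2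
    rw [abs_of_nonneg hx0] at hb
    have hx4 : x ^ 4 ≤ x ^ 2 := pow_le_pow_of_le_one hx0 hx1 (by norm_num)
    norm_num
    nlinarith [sq_nonneg (5 * sin x - 4 * x), sq_nonneg x]

lemma int_pos_part {t : ℝ} (h0 : 0 ≤ t) (h1 : t ≤ 1) :
    ∫ θ in (-(π / 2))..(π / 2), max (t - cos θ) 0 ≤ 1.25 * t ^ 2 := by
  set z := arccos t with hz
  have hc : cos z = t := cos_arccos (by linarith) h1
  have hz0 : 0 ≤ z := arccos_nonneg t
  have hz1 : z ≤ π / 2 := arccos_le_pi_div_two.2 h0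
  have hcont : Continuous fun θ => max (t - cos θ) 0 := by fun_prop
  have hi : ∀ a b, IntervalIntegrable (fun θ => max (t - cos θ) 0) volume a b :=
    fun a b => hcont.intervalIntegrable a b
  have e2 : ∫ θ in (0:ℝ)..(π / 2), max (t - cos θ) 0 = (π / 2 - z) * t - 1 + sin z := by
    rw [← intervalIntegral.integral_add_adjacent_intervals (hi 0 z) (hi z (π / 2))]
    have e3 : ∫ θ in (0:ℝ)..z, max (t - cos θ) 0 = ∫ θ in (0:ℝ)..z, 0 := by
      apply intervalIntegral.integral_congr
      intro x hx
      rw [Set.uIcc_of_le hz0] at hx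
      have : cos z ≤ cos x := cos_le_cos_of_nonneg_of_le_pi hx.1 (by linarith [pi_pos]) hx.2
      simp only
      rw [max_eq_right]; linarith
    have e4 : ∫ θ in z..(π / 2), max (t - cos θ) 0 = ∫ θ in z..(π / 2), (t - cos θ) := by
      apply intervalIntegral.integral_congr
      intro x hx
      rw [Set.uIcc_of_le hz1] at hx
      have : cos x ≤ cos z := cos_le_cos_of_nonneg_of_le_pi hz0 (by linarith [pi_pos, hx.2]) hx.1
      simp only
      rw [max_eq_left]; linarith
    rw [e3, e4, intervalIntegral.integral_sub (by simp)
      (by apply Continuous.intervalIntegrable; fun_prop)]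
    simp; ring
  have e1 : ∫ θ in (-(π / 2))..0, max (t - cos θ) 0 = ∫ θ in (0:ℝ)..(π / 2), max (t - cos θ) 0 := by
    have := intervalIntegral.integral_comp_neg (a := -(π/2)) (b := 0) (fun θ => max (t - cos θ) 0)
    simpa using this
  rw [← intervalIntegral.integral_add_adjacent_intervals (hi _ 0) (hi 0 _), e1, e2]
  have := trig_ineq hz0 hz1
  rw [hc] at this
  linarith

lemma int_neg (F : ℝ → ℝ) : ∫ θ in (-(π / 2))..(π / 2), F (-θ) = ∫ θ in (-(π / 2))..(π / 2), F θ := by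
  have := intervalIntegral.integral_comp_neg (a := -(π/2)) (b := π/2) F
  simpa using this

lemma int_shift (F : ℝ → ℝ) (hF : Function.Periodic F π) (ψ : ℝ) :
    ∫ θ in (-(π / 2))..(π / 2), F (θ + ψ) = ∫ θ in (-(π / 2))..(π / 2), F θ := by
  rw [intervalIntegral.integral_comp_add_right]
  have := hF.intervalIntegral_add_eq (-(π/2) + ψ) (-(π/2))
  convert this using 2 <;> ring

lemma key1 (p q s : ℝ) (h : p ^ 2 + q ^ 2 = 1) (hq : 4 * p ^ 2 ≤ q ^ 2) (hs : 0 ≤ s) :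
    ∫ θ in (-(π / 2))..(π / 2), max |2 * p * cos θ + q * sin θ| s * ww θ
      ≤ sqrt (hN ^ 2 + s ^ 2 * hA ^ 2) := by
  have hw := ww_cont
  have e := int_neg (fun θ => max |2 * p * cos θ + q * sin θ| s * ww θ)
  have e2 : ∫ θ in (-(π / 2))..(π / 2), (max |2 * p * cos θ + q * sin θ| s * ww θ +
      max |2 * p * cos (-θ) + q * sin (-θ)| s * ww (-θ)) ≤
      ∫ θ in (-(π / 2))..(π / 2), (2 * sqrt (1 + s ^ 2)) * ww θ := by
    apply intervalIntegral.integral_mono_on le_half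
      (by apply Continuous.intervalIntegrable; fun_prop)
      (by apply Continuous.intervalIntegrable; fun_prop)
    intro x _
    rw [ww_neg, ← add_mul]
    apply mul_le_mul_of_nonneg_right _ (ww_nonneg x)
    have hm : ∀ f : ℝ, max |f| s ^ 2 ≤ f ^ 2 + s ^ 2 := by
      intro f
      rcases max_choice |f| s with h | h <;> rw [h]
      · rw [sq_abs]; nlinarith
      · nlinarith
    have h1 := hm (2 * p * cos x + q * sin x)
    have h2 := hm (2 * p * cos (-x) + q * sin (-x))
    rw [cos_neg, sin_neg] at *
    set u := max |2 * p * cos x + q * sin x| s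
    set v := max |2 * p * cos x + q * -sin x| s
    have h3 : u ^ 2 + v ^ 2 ≤ 2 * (1 + s ^ 2) := by
      nlinarith [sin_sq_add_cos_sq x, sq_nonneg (cos x), sq_nonneg p]
    have h4 : (u + v) ^ 2 ≤ (2 * sqrt (1 + s ^ 2)) ^ 2 := by
      rw [mul_pow, sq_sqrt (by positivity)]
      nlinarith [sq_nonneg (u - v)]
    exact (abs_le_of_sq_le_sq' h4 (by positivity)).2
  rw [intervalIntegral.integral_add (by apply Continuous.intervalIntegrable; fun_prop)
      (by apply Continuous.intervalIntegrable; fun_prop), e,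
      intervalIntegral.integral_const_mul] at e2
  have h5 : sqrt (1 + s ^ 2) * hA ≤ sqrt (hN ^ 2 + s ^ 2 * hA ^ 2) := by
    apply le_sqrt_of_sq_le
    rw [mul_pow, sq_sqrt (by positivity)]
    nlinarith [hA_le_hN, hA_pos]
  have : hA = ∫ θ in (-(π / 2))..(π / 2), ww θ := rfl
  rw [← this] at e2
  linarith

lemma exists_angle (x y : ℝ) (h : x ^ 2 + y ^ 2 = 1) : ∃ ψ, cos ψ = x ∧ sin ψ = y := by
  have hn : ‖(⟨x, y⟩ : ℂ)‖ = 1 := by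
    rw [Complex.norm_def, Complex.normSq_mk, ← sq, ← sq, h, sqrt_one]
  refine ⟨Complex.arg ⟨x, y⟩, ?_, ?_⟩
  · rw [Complex.cos_arg, hn]; simp
    intro h0; rw [h0] at hn; simp at hn
  · rw [Complex.sin_arg, hn]; simp

lemma half_sum {a b g : ℝ} (hg : 0 ≤ g) (h : a ^ 2 + b ^ 2 = 2 * g ^ 2) : a + b ≤ 2 * g := by
  refine (abs_le_of_sq_le_sq' ?_ (by positivity)).2
  nlinarith [sq_nonneg (a - b)]

lemma cd_ineq {C D : ℝ} (hC : C ≤ 1) (hD : D ≤ 1) :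
    8 * ((5 - 3 * (D * C)) / 2) ≤ 2 ^ 2 * (1 + 3 * ((1 - C) / 2)) * (5 - 3 * D) := by
  nlinarith [mul_nonneg (sub_nonneg.2 hC) (sub_nonneg.2 hD)]

lemma final_num {N A γ R D t : ℝ} (hN1 : N ≤ 5.66) (hN0 : 0 ≤ N) (hA1 : 3 * π / 2 ≤ A)
    (hRpos : 0 < R) (hγ0 : 0 ≤ γ) (hγ2 : γ ^ 2 = (5 + 3 * D) / 2) (hDR : R ^ 2 * (5 - 3 * D) = 8)
    (hD0 : 0 ≤ D) (hD1 : D ≤ 1) (ht0 : 0 ≤ t) (ht1 : t ≤ 1) :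
    (N + γ * R * (1.25 * t ^ 2)) ^ 2 ≤ N ^ 2 + (R * t) ^ 2 * A ^ 2 := by
  have hp := pi_gt_d2
  norm_num at hN1 hp ⊢
  have hγR : γ * 4 ≤ R * (5 - 9 / 10 * D ^ 2) := by
    have hb : 0 ≤ 5 - 9 / 10 * D ^ 2 := by nlinarith
    refine (abs_le_of_sq_le_sq' ?_ (by positivity)).2
    rw [mul_pow, mul_pow, hγ2]
    have h5 : 0 < 5 - 3 * D := by linarith
    have : R ^ 2 = 8 / (5 - 3 * D) := by field_simp; linarith
    rw [this, div_mul_eq_mul_div 8, le_div_iff₀ h5]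
    nlinarith [sq_nonneg (D ^ 2)]
  have hA2 : 22.18 ≤ A ^ 2 := by
    have : 4.71 ≤ A := by norm_num; linarith
    norm_num at this ⊢
    nlinarith
  have h1 : N * γ ≤ 5.66 * γ := mul_le_mul_of_nonneg_right (by norm_num; linarith) hγ0
  have h6 : 5.66 * 2.5 / 4 * (5 - 9 / 10 * D ^ 2) + (5 + 3 * D) / 2 * (25 / 16) ≤ A ^ 2 := by
    norm_num at hA2 ⊢
    linarith [sq_nonneg (D - 0.37)]
  have h7 := mul_le_mul_of_nonneg_left h6 hRpos.le
  have hfin : 2 * N * γ * (5 / 4) + γ ^ 2 * R * (25 / 16) ≤ R * A ^ 2 := by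
    rw [hγ2]
    norm_num at h1 h7
    linarith
  have ht2 : t ^ 2 ≤ 1 := pow_le_one₀ ht0 ht1
  have hx : γ ^ 2 * R * (25 / 16) * t ^ 2 ≤ γ ^ 2 * R * (25 / 16) :=
    mul_le_of_le_one_right (by positivity) ht2
  have hy : 0 ≤ R * t ^ 2 := by positivity
  have := mul_le_mul_of_nonneg_left (show 2 * N * γ * (5 / 4) + γ ^ 2 * R * (25 / 16) * t ^ 2
    ≤ R * A ^ 2 by linarith) hy
  linarith

set_option maxHeartbeats 2000000 in
lemma key2 (p q s : ℝ) (h : p ^ 2 + q ^ 2 = 1) (hq : q ^ 2 < 4 * p ^ 2) (hs : 0 ≤ s) :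
    ∫ θ in (-(π / 2))..(π / 2), max |2 * p * cos θ + q * sin θ| s * ww θ
      ≤ sqrt (hN ^ 2 + s ^ 2 * hA ^ 2) := by
  have hw := ww_cont
  set R := sqrt (4 * p ^ 2 + q ^ 2) with hR
  have hR2 : R ^ 2 = 4 * p ^ 2 + q ^ 2 := sq_sqrt (by positivity)
  have hRpos : 0 < R := sqrt_pos.2 (by nlinarith [sq_nonneg q])
  obtain ⟨ψ, hc, hsn⟩ := exists_angle (2 * p / R) (q / R) (by field_simp; linarith)
  have hf : ∀ θ, 2 * p * cos (θ + ψ) + q * sin (θ + ψ) = R * cos θ := by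
    intro θ
    rw [cos_add, sin_add, hc, hsn]
    field_simp
    rw [hR2]; ring
  set D := cos ψ ^ 2 - sin ψ ^ 2 with hD
  have hcs := sin_sq_add_cos_sq ψ
  have hDR : R ^ 2 * (5 - 3 * D) = 8 := by
    rw [hD, hc, hsn]; field_simp; nlinarith
  have hD0 : 0 ≤ D := by
    rw [hD, hc, hsn, div_pow, div_pow, ← sub_div]
    apply div_nonneg <;> nlinarith
  have hD1 : D ≤ 1 := by rw [hD]; nlinarith [sq_nonneg (sin ψ)]
  -- shift
  have e1 : ∫ θ in (-(π / 2))..(π / 2), max |2 * p * cos θ + q * sin θ| s * ww θ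
      = ∫ θ in (-(π / 2))..(π / 2), max |R * cos θ| s * ww (θ + ψ) := by
    rw [← int_shift (fun θ => max |2 * p * cos θ + q * sin θ| s * ww θ) _ ψ]
    · simp only [hf]
    · intro θ
      simp only [ww_add_pi, cos_add_pi, sin_add_pi]
      rw [← abs_neg]; ring_nf
  have e2 := int_neg (fun θ => max |R * cos θ| s * ww (θ + ψ))
  by_cases hsR : R ≤ s
  · -- trivial case
    have e3 : ∫ θ in (-(π / 2))..(π / 2), max |2 * p * cos θ + q * sin θ| s * ww θ = s * hA := by
      rw [hA, ← intervalIntegral.integral_const_mul]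
      apply intervalIntegral.integral_congr
      intro x _
      simp only
      rw [max_eq_right]
      have := hf (x - ψ)
      rw [sub_add_cancel] at this
      rw [this, abs_mul, abs_of_pos hRpos]
      nlinarith [abs_cos_le_one (x - ψ)]
    rw [e3]
    apply le_sqrt_of_sq_le
    nlinarith [sq_nonneg hN]
  push Not at hsR
  set t := s / R with ht
  have hst : s = R * t := by rw [ht]; field_simp
  have ht0 : 0 ≤ t := by positivity
  have ht1 : t ≤ 1 := by rw [ht, div_le_one hRpos]; exact hsR.le
  set γ := sqrt ((5 + 3 * D) / 2) with hγ
  have hγ2 : γ ^ 2 = (5 + 3 * D) / 2 := sq_sqrt (by positivity)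
  have hγ0 : 0 ≤ γ := sqrt_nonneg _
  have e3 : ∫ θ in (-(π / 2))..(π / 2), (max |R * cos θ| s * ww (θ + ψ) +
      max |R * cos (-θ)| s * ww (-θ + ψ)) ≤
      ∫ θ in (-(π / 2))..(π / 2), (2 * (2 * cos θ * ww θ) + 2 * γ * R * max (t - cos θ) 0) := by
    apply intervalIntegral.integral_mono_on le_half
      (by apply Continuous.intervalIntegrable; fun_prop)
      (by apply Continuous.intervalIntegrable; fun_prop)
    intro x hx
    have hcx := cos_nn hx
    rw [cos_neg, ← mul_add, abs_mul, abs_of_pos hRpos, abs_of_nonneg hcx]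
    set C := cos x ^ 2 - sin x ^ 2 with hC
    have hcsx := sin_sq_add_cos_sq x
    have hC1 : C ≤ 1 := by rw [hC]; nlinarith [sq_nonneg (sin x)]
    have hC2 : -1 ≤ C := by rw [hC]; nlinarith [sq_nonneg (cos x)]
    have hDC : |D * C| ≤ 1 := by
      rw [abs_mul, abs_of_nonneg hD0]
      exact mul_le_one₀ hD1 (abs_nonneg _) (abs_le.2 ⟨hC2, hC1⟩)
    have hDC' := abs_le.1 hDC
    set g := sqrt ((5 - 3 * (D * C)) / 2) with hg
    have hg2 : g ^ 2 = (5 - 3 * (D * C)) / 2 := sq_sqrt (by linarith)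
    have hg0 : 0 ≤ g := sqrt_nonneg _
    have hsum : ww (x + ψ) + ww (-x + ψ) ≤ 2 * g := by
      have h1 := ww_sq (x + ψ)
      have h2 := ww_sq (-x + ψ)
      have h3 : ww (x + ψ) ^ 2 + ww (-x + ψ) ^ 2 = 2 * g ^ 2 := by
        rw [h1, h2, hg2, sin_add, sin_add, sin_neg, cos_neg, hC, hD]
        have a1 : cos x ^ 2 = 1 - sin x ^ 2 := by linarith
        have a2 : cos ψ ^ 2 = 1 - sin ψ ^ 2 := by linarith
        ring_nf
        simp only [a1, a2]; ring
      exact half_sum hg0 h3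
    have hRg : R * g ≤ 2 * ww x := by
      refine (abs_le_of_sq_le_sq' ?_ (by have := ww_nonneg x; positivity)).2
      rw [mul_pow, mul_pow, hg2, ww_sq]
      have a1 : sin x ^ 2 = (1 - C) / 2 := by rw [hC]; linarith
      rw [a1]
      have h5 : 0 < 5 - 3 * D := by linarith
      have : R ^ 2 = 8 / (5 - 3 * D) := by field_simp; linarith
      rw [this, div_mul_eq_mul_div, div_le_iff₀ h5]
      exact cd_ineq hC1 hD1
    have hgγ : g ≤ γ := by
      apply sqrt_le_sqrt
      have : -(D) ≤ D * C := by nlinarith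
      linarith
    have hmax : max (R * cos x) s ≤ R * cos x + R * max (t - cos x) 0 := by
      rw [hst]
      apply max_le
      · nlinarith [le_max_right (t - cos x) 0]
      · nlinarith [le_max_left (t - cos x) 0]
    have hm0 : 0 ≤ max (t - cos x) 0 := le_max_right _ _
    have hM0 : 0 ≤ max (R * cos x) s := le_max_of_le_right hs
    calc max (R * cos x) s * (ww (x + ψ) + ww (-x + ψ)) ≤ max (R * cos x) s * (2 * g) :=
          mul_le_mul_of_nonneg_left hsum hM0
      _ ≤ (R * cos x + R * max (t - cos x) 0) * (2 * g) :=
          mul_le_mul_of_nonneg_right hmax (by positivity)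
      _ = 2 * cos x * (R * g) + 2 * R * max (t - cos x) 0 * g := by ring
      _ ≤ 2 * cos x * (2 * ww x) + 2 * R * max (t - cos x) 0 * γ := by gcongr
      _ = _ := by ring
  rw [intervalIntegral.integral_add (by apply Continuous.intervalIntegrable; fun_prop)
      (by apply Continuous.intervalIntegrable; fun_prop), e2,
      intervalIntegral.integral_add (by apply Continuous.intervalIntegrable; fun_prop)
      (by apply Continuous.intervalIntegrable; fun_prop),
      intervalIntegral.integral_const_mul, intervalIntegral.integral_const_mul] at e3
  have e4 := int_pos_part ht0 ht1
  have hNd : hN = ∫ θ in (-(π / 2))..(π / 2), 2 * cos θ * ww θ := rfl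
  rw [← hNd] at e3
  have e5 : ∫ θ in (-(π / 2))..(π / 2), max |R * cos θ| s * ww (θ + ψ) ≤
      hN + γ * R * (1.25 * t ^ 2) := by
    have : γ * R * ∫ θ in (-(π / 2))..(π / 2), max (t - cos θ) 0 ≤ γ * R * (1.25 * t ^ 2) :=
      mul_le_mul_of_nonneg_left e4 (by positivity)
    linarith
  rw [e1]
  refine e5.trans ?_
  apply le_sqrt_of_sq_le
  rw [hst]
  exact final_num hN_upper (by linarith [hN_lower]) hA_lower hRpos hγ0 hγ2 hDR hD0 hD1 ht0 ht1

lemma key (p q s : ℝ) (h : p ^ 2 + q ^ 2 = 1) (hs : 0 ≤ s) :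
    ∫ θ in (-(π / 2))..(π / 2), max |2 * p * cos θ + q * sin θ| s * ww θ
      ≤ sqrt (hN ^ 2 + s ^ 2 * hA ^ 2) := by
  rcases le_or_gt (4 * p ^ 2) (q ^ 2) with h1 | h1
  · exact key1 p q s h h1 hs
  · exact key2 p q s h h1 hs

/-- parametrization -/
def gam (θ : ℝ) : E2 := pt (2 * cos θ) (sin θ)

lemma gam_eq : gam = fun θ => (2 * cos θ) • pt 1 0 + (sin θ) • pt 0 1 := by
  funext θ
  ext i
  fin_cases i <;> simp [gam, pt]

def gam' (θ : ℝ) : E2 := (2 * -sin θ) • pt 1 0 + (cos θ) • pt 0 1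

lemma norm_pt (a b : ℝ) : ‖pt a b‖ = sqrt (a ^ 2 + b ^ 2) := by
  simp [pt, EuclideanSpace.norm_eq]

lemma norm_gam' (θ : ℝ) : ‖gam' θ‖ = ww θ := by
  have : gam' θ = pt (2 * -sin θ) (cos θ) := by
    ext i
    fin_cases i <;> simp [gam', pt]
  rw [this, norm_pt, ww]
  congr 1; ring

lemma gam_strict (θ : ℝ) : HasStrictDerivAt gam (gam' θ) θ := by
  rw [gam_eq]
  exact (((hasStrictDerivAt_cos θ).const_mul 2).smul_const _).add
    ((hasStrictDerivAt_sin θ).smul_const _)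

lemma gam_cont : Continuous gam :=
  continuous_iff_continuousAt.2 fun θ => (gam_strict θ).hasDerivAt.continuousAt

def ag (p : E2) : ℝ := Complex.arg ⟨p 0 / 2, p 1⟩

lemma ag_meas : Measurable ag := by
  unfold ag
  apply Complex.measurable_arg.comp
  have : (fun p : E2 => (⟨p 0 / 2, p 1⟩ : ℂ)) = fun p => ((p 0 / 2 : ℝ) : ℂ) + ((p 1 : ℝ) : ℂ) * Complex.I := by
    funext p; apply Complex.ext <;> simp
  rw [this]
  apply Continuous.measurable
  fun_prop

lemma ag_gam {θ : ℝ} (h : θ ∈ Set.Ioc (-π) π) : ag (gam θ) = θ := by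
  have := Complex.arg_cos_add_sin_mul_I h
  convert this using 1
  unfold ag gam pt
  congr 1
  apply Complex.ext <;> simp [← Complex.ofReal_cos, ← Complex.ofReal_sin]

lemma ag_mem (p : E2) : ag p ∈ Set.Ioc (-π) π := Complex.arg_mem_Ioc _

lemma gam_ag {p : E2} (h : p ∈ ellipseL) : gam (ag p) = p := by
  have h' : (p 0) ^ 2 + 4 * (p 1) ^ 2 = 4 := h
  have hn : ‖(⟨p 0 / 2, p 1⟩ : ℂ)‖ = 1 := by
    rw [Complex.norm_def, Complex.normSq_mk, sqrt_eq_one]; linarith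
  have h0 : (⟨p 0 / 2, p 1⟩ : ℂ) ≠ 0 := by
    intro h0; rw [h0] at hn; simp at hn
  ext i
  fin_cases i
  · simp only [gam, pt, ag, Complex.cos_arg h0, hn]; simp; ring
  · simp only [gam, pt, ag, Complex.sin_arg, hn]; simp

lemma gam_mem (θ : ℝ) : gam θ ∈ ellipseL := by
  simp only [gam, pt, ellipseL, Set.mem_ofPred_eq]
  simp
  nlinarith [sin_sq_add_cos_sq θ]

lemma ellipse_closed : IsClosed ellipseL := by
  unfold ellipseL
  apply isClosed_eq <;> fun_prop

lemma inter_eq {S : Set ℝ} (hS : S ⊆ Set.Ioc (-π) π) : ag ⁻¹' S ∩ ellipseL = gam '' S := by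
  ext p
  constructor
  · rintro ⟨h1, h2⟩
    exact ⟨ag p, h1, gam_ag h2⟩
  · rintro ⟨θ, h1, rfl⟩
    exact ⟨by simpa [ag_gam (hS h1)] using h1, gam_mem θ⟩

/-- angular image of the arc-length measure -/
def nu : Measure ℝ := ((μH[1] : Measure E2).restrict ellipseL).map ag

lemma nu_apply {S : Set ℝ} (hS : S ⊆ Set.Ioc (-π) π) (hm : MeasurableSet S) :
    nu S = (μH[1] : Measure E2) (gam '' S) := by
  rw [nu, Measure.map_apply ag_meas hm, Measure.restrict_apply (ag_meas hm), inter_eq hS]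

lemma loc_lip (θ : ℝ) {ε : ℝ} (hε : 0 < ε) : ∃ δ > 0, ∀ u ∈ Set.Ioo (θ - δ) (θ + δ),
    ∀ v ∈ Set.Ioo (θ - δ) (θ + δ), dist (gam u) (gam v) ≤ (ww θ + ε) * dist u v ∧
      (ww θ - ε) * dist u v ≤ dist (gam u) (gam v) := by
  have h := (gam_strict θ).hasStrictFDerivAt.isLittleO.def hε
  rw [nhds_prod_eq, (Metric.nhds_basis_ball (x := θ)).prod_self.eventually_iff] at h
  obtain ⟨δ, hδ, h⟩ := h
  refine ⟨δ, hδ, fun u hu v hv => ?_⟩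
  have h2 := @h (u, v) ⟨by rw [Real.ball_eq_Ioo]; exact hu, by rw [Real.ball_eq_Ioo]; exact hv⟩
  simp only [ContinuousLinearMap.toSpanSingleton_apply] at h2
  have h3 : ‖(u - v) • gam' θ‖ = ww θ * dist u v := by
    rw [norm_smul, norm_gam', mul_comm, Real.dist_eq, Real.norm_eq_abs]
  rw [← dist_eq_norm u v] at h2
  rw [dist_eq_norm (gam u)]
  have h4 := abs_le.1 (abs_norm_sub_norm_le (gam u - gam v) ((u - v) • gam' θ))
  rw [h3] at h4
  constructor <;> linarith [h4.1, h4.2]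

lemma nu_Ioc_le {a b K : ℝ} (hK : 0 ≤ K) (hab : a ≤ b) (hS : Set.Ioc a b ⊆ Set.Ioc (-π) π)
    (h : ∀ u ∈ Set.Ioc a b, ∀ v ∈ Set.Ioc a b, dist (gam u) (gam v) ≤ K * dist u v) :
    nu (Set.Ioc a b) ≤ ENNReal.ofReal (K * (b - a)) := by
  rw [nu_apply hS measurableSet_Ioc]
  have hl : LipschitzOnWith K.toNNReal gam (Set.Ioc a b) :=
    LipschitzOnWith.of_dist_le_mul fun u hu v hv => by
      rw [Real.coe_toNNReal K hK]; exact h u hu v hv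
  have := hl.hausdorffMeasure_image_le (d := 1) zero_le_one
  rw [hausdorffMeasure_real, Real.volume_Ioc, ENNReal.rpow_one] at this
  rw [ENNReal.ofReal_mul hK]
  exact this

lemma le_nu_Ioc {a b K : ℝ} (hK : 0 < K) (hab : a ≤ b) (hS : Set.Ioc a b ⊆ Set.Ioc (-π) π)
    (h : ∀ u ∈ Set.Ioc a b, ∀ v ∈ Set.Ioc a b, K * dist u v ≤ dist (gam u) (gam v)) :
    ENNReal.ofReal (K * (b - a)) ≤ nu (Set.Ioc a b) := by
  rw [nu_apply hS measurableSet_Ioc]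
  have hl : LipschitzOnWith (K⁻¹).toNNReal ag (gam '' Set.Ioc a b) := by
    refine LipschitzOnWith.of_dist_le_mul ?_
    rintro _ ⟨u, hu, rfl⟩ _ ⟨v, hv, rfl⟩
    rw [Real.coe_toNNReal _ (by positivity), ag_gam (hS hu), ag_gam (hS hv), inv_mul_eq_div,
      le_div_iff₀ hK, mul_comm]
    exact h u hu v hv
  have := hl.hausdorffMeasure_image_le (d := 1) zero_le_one
  have e : ag '' (gam '' Set.Ioc a b) = Set.Ioc a b := by
    rw [Set.image_image]
    ext x
    constructor
    · rintro ⟨y, hy, rfl⟩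
      simp only [ag_gam (hS hy)]; exact hy
    · intro hx
      exact ⟨x, hx, ag_gam (hS hx)⟩
  rw [e, hausdorffMeasure_real, Real.volume_Ioc, ENNReal.rpow_one] at this
  rw [ENNReal.ofReal_mul hK.le]
  calc ENNReal.ofReal K * ENNReal.ofReal (b - a)
      ≤ ENNReal.ofReal K * (ENNReal.ofReal K⁻¹ * (μH[1] : Measure E2) (gam '' Set.Ioc a b)) := by
        gcongr; exact this
    _ = _ := by
        rw [← mul_assoc, ← ENNReal.ofReal_mul hK.le, mul_inv_cancel₀ hK.ne']; simp

lemma gam_lip (u v : ℝ) : dist (gam u) (gam v) ≤ 2 * dist u v := by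
  have : LipschitzWith 2 gam := by
    apply lipschitzWith_of_nnnorm_deriv_le (𝕜 := ℝ)
      (fun x => (gam_strict x).hasDerivAt.differentiableAt)
    intro x
    rw [(gam_strict x).hasDerivAt.deriv, ← NNReal.coe_le_coe, coe_nnnorm, norm_gam']
    refine (abs_le_of_sq_le_sq' ?_ (by simp)).2
    rw [ww_sq]; simp
    nlinarith [sin_sq_le_one x]
  exact this.dist_le_mul u v

instance nu_fin : IsFiniteMeasure nu := by
  constructor
  have h1 : nu Set.univ = nu (Set.Ioc (-π) π) := by
    rw [nu, Measure.map_apply ag_meas MeasurableSet.univ, Measure.map_apply ag_meas measurableSet_Ioc]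
    congr 1
    ext p; simp only [Set.preimage_univ, Set.mem_univ, Set.mem_preimage, ag_mem]
  rw [h1]
  exact (nu_Ioc_le zero_le_two (by linarith [pi_pos]) le_rfl (fun u _ v _ => gam_lip u v)).trans_lt
    ENNReal.ofReal_lt_top

def Phi (θ : ℝ) : ℝ := nu.real (Set.Ioc (-π) θ)

lemma Phi_sub {a b : ℝ} (ha : -π ≤ a) (hab : a ≤ b) : Phi b - Phi a = nu.real (Set.Ioc a b) := by
  unfold Phi
  rw [← Set.Ioc_union_Ioc_eq_Ioc ha hab, measureReal_union _ measurableSet_Ioc]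
  · ring
  · rw [Set.disjoint_left]; rintro x hx hx'; exact absurd hx.2 (not_le.2 hx'.1)

lemma Phi_cont : ContinuousOn Phi (Set.Icc (-π) π) := by
  have : LipschitzOnWith 2 Phi (Set.Icc (-π) π) := by
    apply LipschitzOnWith.of_le_add_mul
    intro x hx y hy
    rcases le_total x y with h | h
    · have := Phi_sub hx.1 h
      have h2 : 0 ≤ nu.real (Set.Ioc x y) := measureReal_nonneg
      have h3 : 0 ≤ dist x y := dist_nonneg
      simp; linarith
    · have := Phi_sub hy.1 h
      have h2 := nu_Ioc_le zero_le_two h (Set.Ioc_subset_Ioc hy.1 hx.2) (fun u _ v _ => gam_lip u v)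
      have h3 : nu.real (Set.Ioc y x) ≤ 2 * (x - y) :=
        ENNReal.toReal_le_of_le_ofReal (by linarith) h2
      rw [Real.dist_eq, abs_of_nonneg (by linarith)]
      simp; linarith
  exact this.continuousOn

lemma Phi_deriv {θ : ℝ} (h : θ ∈ Set.Ioo (-π) π) : HasDerivAt Phi (ww θ) θ := by
  rw [hasDerivAt_iff_isLittleO, Asymptotics.isLittleO_iff]
  intro ε0 hε0
  set ε := min ε0 (ww θ / 2) with hεd
  have hw := ww_pos θ
  have hε : 0 < ε := lt_min hε0 (by linarith)
  have hε1 : ε ≤ ε0 := min_le_left _ _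
  have hε2 : ε < ww θ := (min_le_right _ _).trans_lt (by linarith)
  obtain ⟨δ, hδ, hl⟩ := loc_lip θ hε
  have main : ∀ a b, a ≤ b → a ∈ Set.Ioo (-π) π → b ∈ Set.Ioo (-π) π →
      a ∈ Set.Ioo (θ - δ) (θ + δ) → b ∈ Set.Ioo (θ - δ) (θ + δ) →
      |Phi b - Phi a - (b - a) * ww θ| ≤ ε0 * (b - a) := by
    intro a b hab ha hb ha' hb'
    have hsub : Set.Ioc a b ⊆ Set.Ioc (-π) π := Set.Ioc_subset_Ioc ha.1.le hb.2.le
    have hsub' : ∀ u ∈ Set.Ioc a b, u ∈ Set.Ioo (θ - δ) (θ + δ) := fun u hu =>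
      ⟨ha'.1.trans hu.1, hu.2.trans_lt hb'.2⟩
    have h1 := nu_Ioc_le (K := ww θ + ε) (by linarith) hab hsub
      (fun u hu v hv => (hl u (hsub' u hu) v (hsub' v hv)).1)
    have h2 := le_nu_Ioc (K := ww θ - ε) (by linarith) hab hsub
      (fun u hu v hv => (hl u (hsub' u hu) v (hsub' v hv)).2)
    have h3 : nu.real (Set.Ioc a b) ≤ (ww θ + ε) * (b - a) :=
      ENNReal.toReal_le_of_le_ofReal (mul_nonneg (by linarith) (by linarith)) h1
    have h4 : (ww θ - ε) * (b - a) ≤ nu.real (Set.Ioc a b) :=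
      (ENNReal.ofReal_le_iff_le_toReal (measure_ne_top _ _)).1 h2
    rw [Phi_sub ha.1.le hab, abs_le]
    have h5 := mul_le_mul_of_nonneg_right hε1 (sub_nonneg.2 hab)
    constructor <;> linarith
  filter_upwards [Ioo_mem_nhds h.1 h.2,
    Ioo_mem_nhds (show θ - δ < θ by linarith) (show θ < θ + δ by linarith)] with x hx hx'
  have hθ' : θ ∈ Set.Ioo (θ - δ) (θ + δ) := ⟨by linarith, by linarith⟩
  rw [smul_eq_mul, Real.norm_eq_abs, Real.norm_eq_abs]
  rcases le_total θ x with hle | hle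
  · rw [abs_of_nonneg (sub_nonneg.2 hle)]
    exact main θ x hle h hx hθ' hx'
  · rw [abs_of_nonpos (sub_nonpos.2 hle), neg_sub, ← abs_neg]
    have := main x θ hle hx h hx' hθ'
    convert this using 2; ring

lemma nu_Ioc {a b : ℝ} (ha : -π ≤ a) (hab : a ≤ b) (hb : b ≤ π) :
    nu (Set.Ioc a b) = ENNReal.ofReal (∫ θ in a..b, ww θ) := by
  rw [intervalIntegral.integral_eq_sub_of_hasDerivAt_of_le hab
    (Phi_cont.mono (Set.Icc_subset_Icc ha hb))
    (fun x hx => Phi_deriv ⟨ha.trans_lt hx.1, hx.2.trans_le hb⟩) (ww_cont.intervalIntegrable _ _),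
    Phi_sub ha hab]
  simp [Measure.real]

lemma nu_eq : nu = (volume.restrict (Set.Ioc (-π) π)).withDensity (fun θ => ENNReal.ofReal (ww θ)) := by
  apply Measure.ext_of_Ioc
  intro a b hab
  have e1 : nu (Set.Ioc a b) = nu (Set.Ioc a b ∩ Set.Ioc (-π) π) := by
    rw [nu, Measure.map_apply ag_meas measurableSet_Ioc,
      Measure.map_apply ag_meas (measurableSet_Ioc.inter measurableSet_Ioc)]
    congr 1
    ext p; simp only [Set.mem_preimage, Set.mem_inter_iff, ag_mem, and_true]
  rw [e1, withDensity_apply _ measurableSet_Ioc, Measure.restrict_restrict measurableSet_Ioc,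
    Set.Ioc_inter_Ioc]
  set a' := max a (-π)
  set b' := min b π
  rcases le_total b' a' with h | h
  · simp [Set.Ioc_eq_empty (not_lt.2 h)]
  · rw [nu_Ioc (le_max_right _ _) h (min_le_right _ _), intervalIntegral.integral_of_le h,
      ofReal_integral_eq_lintegral_ofReal]
    · exact (ww_cont.intervalIntegrable a' b').1
    · exact Eventually.of_forall fun x => (ww_pos x).le

lemma integral_ellipse (F : E2 → ℝ) (hF : Continuous F) :
    ∫ x, F x ∂((μH[1] : Measure E2).restrict ellipseL) = ∫ θ in (-π)..π, F (gam θ) * ww θ := by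
  have e1 : ∫ x, F x ∂((μH[1] : Measure E2).restrict ellipseL) =
      ∫ x, F (gam (ag x)) ∂((μH[1] : Measure E2).restrict ellipseL) := by
    apply setIntegral_congr_fun ellipse_closed.measurableSet
    intro x hx
    simp only [gam_ag hx]
  have hc : Continuous fun θ => F (gam θ) := hF.comp gam_cont
  rw [e1, ← integral_map (f := fun θ => F (gam θ)) ag_meas.aemeasurable hc.aestronglyMeasurable]
  change ∫ θ, F (gam θ) ∂nu = _
  rw [nu_eq, intervalIntegral.integral_of_le (by linarith [pi_pos]),
    integral_withDensity_eq_integral_toReal_smul]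
  · apply integral_congr_ae
    apply Eventually.of_forall
    intro θ
    simp only [ENNReal.toReal_ofReal (ww_pos θ).le, smul_eq_mul, mul_comm]
  · exact ww_cont.measurable.ennreal_ofReal
  · exact Eventually.of_forall fun _ => ENNReal.ofReal_lt_top

lemma full_half (F : ℝ → ℝ) (hF : Continuous F) (hp : Function.Periodic F (2 * π)) (a : ℝ) :
    ∫ θ in a..(a + 2 * π), F θ = ∫ θ in (-(π / 2))..(π / 2), (F θ + F (θ + π)) := by
  rw [hp.intervalIntegral_add_eq a (-(π / 2)),
    ← intervalIntegral.integral_add_adjacent_intervals (b := π / 2) (hF.intervalIntegrable _ _)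
      (hF.intervalIntegrable _ _),
    intervalIntegral.integral_add (hF.intervalIntegrable _ _)
      (by apply Continuous.intervalIntegrable; fun_prop)]
  congr 1
  rw [intervalIntegral.integral_comp_add_right]
  congr 1 <;> ring

lemma ellipseA_eq : ellipseA = 2 * hA := by
  have h := full_half ww ww_cont (fun x => by
    rw [show x + 2 * π = x + π + π by ring, ww_add_pi, ww_add_pi]) 0
  rw [zero_add] at h
  change ∫ θ in (0 : ℝ)..(2 * π), ww θ = _
  rw [h, hA, ← intervalIntegral.integral_const_mul]
  congr 1; funext x; rw [ww_add_pi]; ring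

def cost (a b x : E2) : ℝ := min (‖x - a‖ ^ 2) (‖x - b‖ ^ 2)

lemma cost_cont (a b : E2) : Continuous (cost a b) := by unfold cost; fun_prop

def hW : ℝ := ∫ θ in (-(π / 2))..(π / 2), (4 * cos θ ^ 2 + sin θ ^ 2) * ww θ

lemma nsq (x a : E2) : ‖x - a‖ ^ 2 = (x 0 - a 0) ^ 2 + (x 1 - a 1) ^ 2 := by
  rw [EuclideanSpace.norm_sq_eq, Fin.sum_univ_two]
  simp

lemma abs_pair (X Y : ℝ) : |X - Y| + |X + Y| = 2 * max |X| |Y| := by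
  rcases le_total 0 X with h1 | h1 <;> rcases le_total 0 Y with h2 | h2 <;>
  rcases le_total 0 (X - Y) with h3 | h3 <;> rcases le_total 0 (X + Y) with h4 | h4 <;>
  simp only [abs_of_nonneg, abs_of_nonpos, h1, h2, h3, h4] <;>
  rcases max_cases X Y with h | h <;> rcases max_cases (-X) Y with h' | h' <;>
  rcases max_cases X (-Y) with h'' | h'' <;> rcases max_cases (-X) (-Y) with h5 | h5 <;> linarith

lemma min_form {A B k : ℝ} (h : B - A = 4 * k) : min A B = (A + B) / 2 - 2 * |k| := by
  rcases le_total 0 k with hk | hk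
  · rw [abs_of_nonneg hk, min_eq_left (by linarith)]; linarith
  · rw [abs_of_nonpos hk, min_eq_right (by linarith)]; linarith

lemma cost_sum (a b : E2) (θ : ℝ) (d0 d1 m0 m1 : ℝ) (hd0 : d0 = (a 0 - b 0) / 2)
    (hd1 : d1 = (a 1 - b 1) / 2) (hm0 : m0 = (a 0 + b 0) / 2) (hm1 : m1 = (a 1 + b 1) / 2) :
    cost a b (gam θ) + cost a b (gam (θ + π)) =
    2 * (4 * cos θ ^ 2 + sin θ ^ 2) + 2 * (m0 ^ 2 + m1 ^ 2 + d0 ^ 2 + d1 ^ 2)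
    - 4 * max |2 * d0 * cos θ + d1 * sin θ| |m0 * d0 + m1 * d1| := by
  have h := abs_pair (2 * d0 * cos θ + d1 * sin θ) (m0 * d0 + m1 * d1)
  have ea0 : a 0 = m0 + d0 := by rw [hd0, hm0]; ring
  have ea1 : a 1 = m1 + d1 := by rw [hd1, hm1]; ring
  have eb0 : b 0 = m0 - d0 := by rw [hd0, hm0]; ring
  have eb1 : b 1 = m1 - d1 := by rw [hd1, hm1]; ring
  have g0 : ∀ t, gam t 0 = 2 * cos t := by intro t; simp [gam, pt]
  have g1 : ∀ t, gam t 1 = sin t := by intro t; simp [gam, pt]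
  unfold cost
  simp only [nsq, g0, g1, ea0, ea1, eb0, eb1, cos_add_pi, sin_add_pi]
  rw [min_form (k := (2 * d0 * cos θ + d1 * sin θ) - (m0 * d0 + m1 * d1)) (by ring),
    min_form (k := -((2 * d0 * cos θ + d1 * sin θ) + (m0 * d0 + m1 * d1))) (by ring), abs_neg]
  linarith

lemma gam_two_pi (θ : ℝ) : gam (θ + 2 * π) = gam θ := by simp [gam]

lemma J_eq (a b : E2) (d0 d1 m0 m1 : ℝ) (hd0 : d0 = (a 0 - b 0) / 2)
    (hd1 : d1 = (a 1 - b 1) / 2) (hm0 : m0 = (a 0 + b 0) / 2) (hm1 : m1 = (a 1 + b 1) / 2) :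
    ∫ θ in (-π)..π, cost a b (gam θ) * ww θ = 2 * hW + 2 * (m0 ^ 2 + m1 ^ 2 + d0 ^ 2 + d1 ^ 2) * hA
      - 4 * ∫ θ in (-(π / 2))..(π / 2),
        max |2 * d0 * cos θ + d1 * sin θ| |m0 * d0 + m1 * d1| * ww θ := by
  have hw := ww_cont
  have hg := gam_cont
  have hcc := cost_cont a b
  have h := full_half (fun θ => cost a b (gam θ) * ww θ) (by fun_prop) (fun x => by
    simp only [gam_two_pi]
    rw [show x + 2 * π = x + π + π by ring, ww_add_pi, ww_add_pi]) (-π)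
  rw [show -π + 2 * π = π by ring] at h
  rw [h, hW, hA, ← intervalIntegral.integral_const_mul, ← intervalIntegral.integral_const_mul,
    ← intervalIntegral.integral_const_mul, ← intervalIntegral.integral_add,
    ← intervalIntegral.integral_sub]
  · congr 1
    funext θ
    rw [ww_add_pi, ← add_mul, cost_sum a b θ d0 d1 m0 m1 hd0 hd1 hm0 hm1]
    ring
  all_goals (apply Continuous.intervalIntegrable; fun_prop)

lemma exists_polar (d0 d1 : ℝ) : ∃ r p q : ℝ, 0 ≤ r ∧ p ^ 2 + q ^ 2 = 1 ∧ d0 = r * p ∧ d1 = r * q := by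
  refine ⟨‖(⟨d0, d1⟩ : ℂ)‖, cos (Complex.arg ⟨d0, d1⟩), sin (Complex.arg ⟨d0, d1⟩), norm_nonneg _,
    cos_sq_add_sin_sq _, ?_, ?_⟩
  · rw [Complex.norm_mul_cos_arg]
  · rw [Complex.norm_mul_sin_arg]

lemma J_lower (a b : E2) :
    2 * hW - 2 * (hN ^ 2 / hA) ≤ ∫ θ in (-π)..π, cost a b (gam θ) * ww θ := by
  rw [J_eq a b _ _ _ _ rfl rfl rfl rfl]
  generalize (a 0 - b 0) / 2 = d0
  generalize (a 1 - b 1) / 2 = d1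
  generalize (a 0 + b 0) / 2 = m0
  generalize (a 1 + b 1) / 2 = m1
  obtain ⟨r, p, q, hr, hpq, rfl, rfl⟩ := exists_polar d0 d1
  set s := m0 * p + m1 * q with hs
  have e : ∫ θ in (-(π / 2))..(π / 2),
        max |2 * (r * p) * cos θ + (r * q) * sin θ| |m0 * (r * p) + m1 * (r * q)| * ww θ
      = r * ∫ θ in (-(π / 2))..(π / 2), max |2 * p * cos θ + q * sin θ| |s| * ww θ := by
    rw [← intervalIntegral.integral_const_mul]
    congr 1
    funext θ
    rw [show 2 * (r * p) * cos θ + (r * q) * sin θ = r * (2 * p * cos θ + q * sin θ) by ring,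
      show m0 * (r * p) + m1 * (r * q) = r * s by rw [hs]; ring, abs_mul, abs_mul,
      abs_of_nonneg hr, ← mul_max_of_nonneg _ _ hr]
    ring
  rw [e]
  have hk := mul_le_mul_of_nonneg_left (key p q |s| hpq (abs_nonneg s)) hr
  rw [sq_abs] at hk
  set S := sqrt (hN ^ 2 + s ^ 2 * hA ^ 2) with hS
  have hS2 : S ^ 2 = hN ^ 2 + s ^ 2 * hA ^ 2 := sq_sqrt (by positivity)
  have hA0 := hA_pos
  have hsm : s ^ 2 ≤ m0 ^ 2 + m1 ^ 2 := by
    have : m0 ^ 2 + m1 ^ 2 - s ^ 2 = (m0 * q - m1 * p) ^ 2 := by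
      have h1 : m0 ^ 2 + m1 ^ 2 = (m0 ^ 2 + m1 ^ 2) * (p ^ 2 + q ^ 2) := by rw [hpq]; ring
      rw [h1, hs]; ring
    nlinarith [sq_nonneg (m0 * q - m1 * p)]
  have hrr : (r * p) ^ 2 + (r * q) ^ 2 = r ^ 2 := by
    rw [mul_pow, mul_pow, ← mul_add, hpq, mul_one]
  have hfin : 0 ≤ (s ^ 2 + r ^ 2) * hA - 2 * (r * S) + hN ^ 2 / hA := by
    have : (s ^ 2 + r ^ 2) * hA - 2 * (r * S) + hN ^ 2 / hA = (r * hA - S) ^ 2 / hA := by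
      field_simp
      have := hS2
      ring_nf
      ring_nf at this
      rw [this]; ring
    rw [this]; positivity
  have h2 := mul_le_mul_of_nonneg_right hsm hA0.le
  have h3 : (m0 ^ 2 + m1 ^ 2 + (r * p) ^ 2 + (r * q) ^ 2) * hA = (m0 ^ 2 + m1 ^ 2 + r ^ 2) * hA := by
    rw [← hrr]; ring
  linarith

lemma J_opt (c : ℝ) (hc : c = hN / hA) :
    ∫ θ in (-π)..π, cost (pt c 0) (pt (-c) 0) (gam θ) * ww θ = 2 * hW - 2 * (hN ^ 2 / hA) := by
  have hA0 := hA_pos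
  have hN0 : 0 < hN := by linarith [hN_lower]
  have hc0 : 0 ≤ c := by rw [hc]; positivity
  rw [J_eq _ _ c 0 0 0 (by simp [pt]) (by simp [pt]) (by simp [pt]) (by simp [pt])]
  have e : ∫ θ in (-(π / 2))..(π / 2), max |2 * c * cos θ + 0 * sin θ| |0 * c + 0 * 0| * ww θ
      = c * hN := by
    rw [hN, ← intervalIntegral.integral_const_mul]
    apply intervalIntegral.integral_congr
    intro x hx
    rw [Set.uIcc_of_le le_half] at hx
    have := cos_nn hx
    simp only [zero_mul, add_zero, mul_zero, abs_zero]
    rw [max_eq_left (abs_nonneg _), abs_of_nonneg (by positivity)]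
    ring
  rw [e, hc]
  field_simp
  ring

lemma sInf_cost (a b x : E2) : sInf ((fun a => ‖x - a‖ ^ 2) '' {a, b}) = cost a b x := by
  rw [Set.image_pair, csInf_pair]; rfl

lemma err_pair (a b : E2) : ∫ x, sInf ((fun a => ‖x - a‖ ^ 2) '' {a, b}) ∂ellipseP =
    (2 * hA)⁻¹ * ∫ θ in (-π)..π, cost a b (gam θ) * ww θ := by
  simp only [sInf_cost]
  rw [ellipseP, integral_smul_measure, integral_ellipse _ (cost_cont a b), ENNReal.toReal_inv,
    ellipseA_eq, ENNReal.toReal_ofReal (by linarith [hA_pos]), smul_eq_mul]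

lemma exists_pair {α : Set E2} (hf : α.Finite) (hn : α.Nonempty) (h : α.ncard ≤ 2) :
    ∃ a b, α = {a, b} := by
  have h0 : 0 < α.ncard := (Set.ncard_pos hf).2 hn
  have : α.ncard = 1 ∨ α.ncard = 2 := by omega
  rcases this with h1 | h1
  · obtain ⟨a, rfl⟩ := Set.ncard_eq_one.1 h1
    exact ⟨a, a, by simp⟩
  · obtain ⟨a, b, _, rfl⟩ := Set.ncard_eq_two.1 h1
    exact ⟨a, b, rfl⟩

/-- For the uniform distribution on the ellipse `x₁² + 4x₂² = 4`, the optimal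
set of two-means is `{(c,0), (-c,0)}`, where
`c = (∫_{-π/2}^{π/2} 2cosθ √(4sin²θ+cos²θ) dθ)/(∫_{-π/2}^{π/2} √(4sin²θ+cos²θ) dθ)`
is the first coordinate of the conditional expectation of `X` given
`{x₁ ≥ 0}`; moreover the boundary of the two Voronoi regions is the minor axis
(the `x₂`-axis). -/
theorem stmt_17 (c : ℝ)
    (hc : c = (∫ θ in (-(Real.pi / 2))..(Real.pi / 2),
        2 * Real.cos θ * Real.sqrt (4 * Real.sin θ ^ 2 + Real.cos θ ^ 2)) /
      (∫ θ in (-(Real.pi / 2))..(Real.pi / 2),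
        Real.sqrt (4 * Real.sin θ ^ 2 + Real.cos θ ^ 2))) :
    IsOptimalSet ellipseP 2 {pt c 0, pt (-c) 0} ∧
    {x : E2 | ‖x - pt c 0‖ = ‖x - pt (-c) 0‖} = {x : E2 | x 0 = 0} := by
  have hc' : c = hN / hA := hc
  have hA0 := hA_pos
  have hN0 : 0 < hN := by linarith [hN_lower]
  have hc0 : 0 < c := by rw [hc']; positivity
  have hfin : ({pt c 0, pt (-c) 0} : Set E2).Finite := Set.toFinite _
  have hne : ({pt c 0, pt (-c) 0} : Set E2).Nonempty := Set.insert_nonempty _ _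
  have hcard : ({pt c 0, pt (-c) 0} : Set E2).ncard ≤ 2 := by
    have := Set.ncard_insert_le (pt c 0) {pt (-c) 0}
    rwa [Set.ncard_singleton] at this
  refine ⟨⟨hfin, hne, hcard, ?_⟩, ?_⟩
  · symm
    apply IsLeast.csInf_eq
    refine ⟨⟨_, hfin, hne, hcard, rfl⟩, ?_⟩
    rintro v ⟨α, h1, h2, h3, rfl⟩
    obtain ⟨a, b, rfl⟩ := exists_pair h1 h2 h3
    rw [err_pair, err_pair, J_opt c hc']
    exact mul_le_mul_of_nonneg_left (J_lower a b) (by positivity)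
  · ext x
    simp only [Set.mem_ofPred_eq]
    rw [← sq_eq_sq₀ (norm_nonneg _) (norm_nonneg _), nsq, nsq]
    simp only [pt]
    simp
    constructor
    · intro h
      have : c * x 0 = 0 := by linarith
      rcases mul_eq_zero.1 this with h' | h'
      · exact absurd h' hc0.ne'
      · exact h'
    · intro h
      rw [h]; ring
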